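/- Converse direction of the main theorem: with h, f as above, 𝒟δ_h = ℛ_h, if ℒ_{h,f} = ℛ_{h,f} then −1 is not a root of b'_f(h,s) and b'_f(h,s) has no strictly negative integral root. In particular, under the assumption 1 ∈ 𝒟𝒥_{h,f} + Ann_𝒟 δ_{h,f} and that −1 is the smallest integral root of b_f(δ_h,s), the polynomial identity argument shows (s+1) cannot divide b'_f(h,s). -/

import Mathlib

open Polynomial

noncomputable section

set_option maxHeartbeats 1000000
set_option synthInstance.maxHeartbeats 400000

/-- The ring `𝒪` of germs (polynomial model `ℂ[x₁,…,xₙ]`). -/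
abbrev OO (n : ℕ) := MvPolynomial (Fin n) ℂ
/-- The fraction field of `𝒪`. -/
abbrev KK (n : ℕ) := FractionRing (OO n)

variable {n : ℕ}

/-- Inclusion `𝒪 → K`. -/
def toK {n : ℕ} (r : OO n) : KK n := algebraMap _ _ r

/-- A family of derivations of `K` extending the partial derivatives `∂/∂xᵢ` of `𝒪`. -/
def ExtendsPderiv (d : Fin n → Derivation ℂ (KK n) (KK n)) : Prop :=
  ∀ (i : Fin n) (r : OO n), d i (toK r) = toK (MvPolynomial.pderiv i r)

/-- Coefficientwise action of a derivation of `K` on `K[s]`. -/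
def coeffDer (d : Derivation ℂ (KK n) (KK n)) :
    Derivation ℂ (Polynomial (KK n)) (Polynomial (KK n)) :=
  PolynomialModule.equivPolynomialSelf.compDer d.mapCoeffs

/-- Multiplication operator on `K[s]`. -/
def mulOp (a : Polynomial (KK n)) : Module.End ℂ (Polynomial (KK n)) :=
  LinearMap.mulLeft ℂ a

/-- Twisted partial-derivative operator on `K[s]·f^s`:
`∂ᵢ(g(s) f^s) = ((∂ᵢ g)(s) + s·g(s)·(∂ᵢf/f))·f^s`. -/
def Dop (d : Derivation ℂ (KK n) (KK n)) (f : OO n) : Module.End ℂ (Polynomial (KK n)) :=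
  (coeffDer d).toLinearMap + mulOp (Polynomial.X * Polynomial.C (d (toK f) / toK f))

/-- The image of `𝒟[s]` in `End(K[s]·f^s)`: the ℂ-algebra generated by multiplications by
elements of `𝒪`, multiplication by `s`, and the twisted partials `∂ᵢ`. -/
def WeylS (d : Fin n → Derivation ℂ (KK n) (KK n)) (f : OO n) :
    Subalgebra ℂ (Module.End ℂ (Polynomial (KK n))) :=
  Algebra.adjoin ℂ
    ((Set.range fun r : OO n => mulOp (Polynomial.C (toK r))) ∪ {mulOp Polynomial.X} ∪
      Set.range fun i => Dop (d i) f)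

/-- The `𝒟[s]`-orbit span `𝒟[s]·T` of a set `T ⊆ K[s]·f^s`. -/
def DSpan (d : Fin n → Derivation ℂ (KK n) (KK n)) (f : OO n)
    (T : Set (Polynomial (KK n))) : Submodule ℂ (Polynomial (KK n)) :=
  Submodule.span ℂ {y | ∃ P ∈ WeylS d f, ∃ t ∈ T, y = P t}

/-- The image of `𝒟` in `End(K)` (untwisted action). -/
def Weyl0 (d : Fin n → Derivation ℂ (KK n) (KK n)) : Subalgebra ℂ (Module.End ℂ (KK n)) :=
  Algebra.adjoin ℂ
    ((Set.range fun r : OO n => LinearMap.mulLeft ℂ (toK r)) ∪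
      Set.range fun i => (d i).toLinearMap)

/-- The `𝒟`-orbit span `𝒟·T` of a set `T ⊆ K`. -/
def DSpan0 (d : Fin n → Derivation ℂ (KK n) (KK n)) (T : Set (KK n)) : Submodule ℂ (KK n) :=
  Submodule.span ℂ {y | ∃ P ∈ Weyl0 d, ∃ t ∈ T, y = P t}

/-- The ℂ-submodule `Σ_{g ∈ G} 𝒪[1/g]` of `K`. -/
def locSub (G : Set (OO n)) : Submodule ℂ (KK n) :=
  Submodule.span ℂ {x | ∃ r : OO n, ∃ g ∈ G, ∃ k : ℕ, x = toK r * (toK g)⁻¹ ^ k}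

/-- Polynomials in `s` all of whose coefficients lie in `V`. -/
def polySub (V : Submodule ℂ (KK n)) : Submodule ℂ (Polynomial (KK n)) where
  carrier := {g | ∀ m, g.coeff m ∈ V}
  add_mem' := fun ha hb m => by simpa using V.add_mem (ha m) (hb m)
  zero_mem' := fun m => by rw [Polynomial.coeff_zero]; exact V.zero_mem
  smul_mem' := fun c g hg m => by
    simpa [Polynomial.coeff_smul] using V.smul_mem c (hg m)

/-- Maximal `(p+1)×(p+1)` minor of the Jacobian matrix of `(h₁,…,h_p,f)`
on the columns `cols`. -/
def minorHF {p : ℕ} (h : Fin p → OO n) (f : OO n) (cols : Fin (p + 1) → Fin n) : OO n :=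
  Matrix.det (Matrix.of fun i j =>
    Fin.lastCases (MvPolynomial.pderiv (cols j) f)
      (fun i' => MvPolynomial.pderiv (cols j) (h i')) i)

/-- `p×p` minor of the Jacobian matrix of `h = (h₁,…,h_p)` on the columns `cols`. -/
def minorH {p : ℕ} (h : Fin p → OO n) (cols : Fin p → Fin n) : OO n :=
  Matrix.det (Matrix.of fun i j => MvPolynomial.pderiv (cols j) (h i))

/-- Image of `b(s) ∈ ℂ[s]` in `K[s]`. -/
def bK {n : ℕ} (b : Polynomial ℂ) : Polynomial (KK n) :=
  b.map ((algebraMap (OO n) (KK n)).comp MvPolynomial.C)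

/-!
Write `N j = 𝒟[s]·δ_h f^(s+j)`, and suppose `k` is the smallest negative integral root of `b'`.

By Laplace expansion a maximal minor `m` of the Jacobian matrix of `(h, f)` is `D f` for a vector
field `D` which kills the `h i`, so `D (δ_h f^(s+1)) = (s + 1) m δ_h f^s` lies in `N 1`. Hence
`(s + 1) b'(s)` is a Bernstein polynomial for `δ_h f^s`, and it has no integral root below `k`.
Shifting `s` shows that multiplication by `s - k` is injective on `(⋃ j, N j) / N 0`. Since
`𝒟 δ_h = ℛ_h`, the union of the `N j` consists of all polynomials in `s` with coefficients in
`𝒪[1/(f h₁⋯h_p)]`.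

By `ℒ_{h,f} = ℛ_{h,f}`, the specialization `δ_h f^k` at `s = k` of `δ_h f^s` is also that of some
`u ∈ 𝒟[s](𝒥_{h,f}, f) δ_h f^s`, so `δ_h f^s - u = (s - k) q` with `q ∈ N 0`. Writing
`b' = (s - k) b₁`, we get `b₁ (δ_h f^s - u) = b' q`, so `b₁` already sends `δ_h f^s` into
`𝒟[s](𝒥_{h,f}, f) δ_h f^s`, against the minimality of `b'`.
-/

section PolynomialsAndDerivations

lemma isCoprime_X_sub_C_taylor_iff {F : Type*} [Field F] {a c : F} {b : F[X]} :
    IsCoprime (X - C a) (taylor c b) ↔ b.eval (a + c) ≠ 0 := by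
  rw [(irreducible_X_sub_C _).coprime_iff_not_dvd, dvd_iff_isRoot, IsRoot, taylor_eval]

lemma forall_neg_eval_intCast_ne_zero {A : Type*} [CommRing A] [IsDomain A] [CharZero A]
    {p : A[X]} (hp : p ≠ 0)
    (h : ∀ k : ℤ, k < 0 → (∀ l < k, p.eval (l : A) ≠ 0) → p.eval (k : A) ≠ 0) (k : ℤ)
    (hk : k < 0) : p.eval (k : A) ≠ 0 := by
  intro hpk
  have hfin : {l : ℤ | p.eval (l : A) = 0}.Finite :=
    (finite_setOfPred_isRoot hp).preimage Int.cast_injective.injOn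
  obtain ⟨m, hmk, hm⟩ := hfin.exists_le_minimal hpk
  exact h m (hmk.trans_lt hk) (fun l hl hpl => hm.not_lt hpl hl) hm.prop

lemma derivation_sum_smul_apply {R A ι : Type*} [CommSemiring R] [CommSemiring A] [Algebra R A]
    (s : Finset ι) (c : ι → A) (D : ι → Derivation R A A) (x : A) :
    (∑ j ∈ s, c j • D j) x = ∑ j ∈ s, c j * D j x := by
  rw [← Derivation.coeFnAddMonoidHom_apply, map_sum, Finset.sum_apply]
  rfl

end PolynomialsAndDerivations

section StableSubmodules

variable {R M : Type*} [CommSemiring R] [AddCommMonoid M] [Module R M]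
  {A : Subalgebra R (Module.End R M)} {N N' : Submodule R M} {T : Set M}

/-- `N` is stable under every operator in `A`, i.e. it is an `A`-submodule of `M`. Submodules are
kept over the base ring `R` so that they can be moved along maps which are only semilinear over
`A`, such as the shift `s ↦ s + k`. -/
def IsStable (A : Subalgebra R (Module.End R M)) (N : Submodule R M) : Prop :=
  ∀ P ∈ A, N ≤ N.comap P

/-- The `A`-submodule generated by `T`; `DSpan` and `DSpan0` are the cases `A = 𝒟[s]` and
`A = 𝒟`. -/
def orbitSpan (A : Subalgebra R (Module.End R M)) (T : Set M) : Submodule R M :=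
  Submodule.span R {y | ∃ P ∈ A, ∃ t ∈ T, y = P t}

lemma isStable_adjoin {S : Set (Module.End R M)} (h : ∀ P ∈ S, N ≤ N.comap P) :
    IsStable (Algebra.adjoin R S) N := by
  intro P hP
  induction hP using Algebra.adjoin_induction with
  | mem _ hP => exact h _ hP
  | algebraMap c => exact fun x hx => N.smul_mem c hx
  | add _ _ _ _ hP hQ => exact fun x hx => N.add_mem (hP hx) (hQ hx)
  | mul _ _ _ _ hP hQ => exact fun x hx => hP (hQ hx)

lemma IsStable.sup (h : IsStable A N) (h' : IsStable A N') : IsStable A (N ⊔ N') := fun P hP =>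
  sup_le ((h P hP).trans (Submodule.comap_mono le_sup_left))
    ((h' P hP).trans (Submodule.comap_mono le_sup_right))

lemma IsStable.iSup {ι : Sort*} {F : ι → Submodule R M} (h : ∀ i, IsStable A (F i)) :
    IsStable A (⨆ i, F i) := fun P hP =>
  iSup_le fun i => (h i P hP).trans (Submodule.comap_mono (le_iSup F i))

lemma isStable_orbitSpan (A : Subalgebra R (Module.End R M)) (T : Set M) :
    IsStable A (orbitSpan A T) := by
  refine fun P hP => Submodule.span_le.2 ?_
  rintro _ ⟨Q, hQ, t, ht, rfl⟩
  exact Submodule.subset_span ⟨P * Q, mul_mem hP hQ, t, ht, rfl⟩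

lemma subset_orbitSpan : T ⊆ orbitSpan A T := fun t ht =>
  Submodule.subset_span ⟨1, one_mem A, t, ht, rfl⟩

lemma IsStable.orbitSpan_le (h : IsStable A N) (hT : T ⊆ N) : orbitSpan A T ≤ N := by
  refine Submodule.span_le.2 ?_
  rintro _ ⟨P, hP, t, ht, rfl⟩
  exact h P hP (hT ht)

end StableSubmodules

section FractionField

lemma toK_mul (a b : OO n) : toK (a * b) = toK a * toK b := map_mul _ _ _

lemma toK_sum {ι : Type*} (s : Finset ι) (a : ι → OO n) :
    toK (∑ i ∈ s, a i) = ∑ i ∈ s, toK (a i) := map_sum _ _ _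

lemma toK_pow (a : OO n) (k : ℕ) : toK (a ^ k) = toK a ^ k := map_pow _ _ _

lemma toK_ne_zero {a : OO n} (ha : a ≠ 0) : toK a ≠ 0 :=
  (map_ne_zero_iff _ (IsFractionRing.injective (OO n) (KK n))).2 ha

end FractionField

section BernsteinPolynomials

lemma bK_eq_aeval (b : ℂ[X]) : bK (n := n) b = aeval X b := by
  rw [aeval_X_left_eq_map]
  rfl

lemma bK_mul (a b : ℂ[X]) : bK (n := n) (a * b) = bK a * bK b := Polynomial.map_mul _

lemma bK_X_add_one : bK (n := n) (X + 1) = X + 1 := by simp [bK]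

lemma bK_X_sub_C (c : ℂ) : bK (n := n) (X - C c) = X - C (algebraMap ℂ (KK n) c) := by
  rw [bK, Polynomial.map_sub, map_X, map_C]
  rfl

lemma bK_taylor_intCast (k : ℤ) (b : ℂ[X]) :
    bK (n := n) (taylor (k : ℂ) b) = taylor (k : KK n) (bK b) := by
  rw [bK, map_taylor, map_intCast]
  rfl

end BernsteinPolynomials

section Operators

variable {d : Fin n → Derivation ℂ (KK n) (KK n)} {f : OO n} {W : Submodule ℂ (KK n)}
  {N : Submodule ℂ (KK n)[X]}

lemma mulOp_apply (a g : (KK n)[X]) : mulOp a g = a * g := rfl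

lemma Dop_apply (D : Derivation ℂ (KK n) (KK n)) (f : OO n) (g : (KK n)[X]) :
    Dop D f g = coeffDer D g + X * C (D (toK f) / toK f) * g := rfl

lemma coeff_coeffDer (D : Derivation ℂ (KK n) (KK n)) (g : (KK n)[X]) (m : ℕ) :
    (coeffDer D g).coeff m = D (g.coeff m) := rfl

lemma coeffDer_C (D : Derivation ℂ (KK n) (KK n)) (x : KK n) : coeffDer D (C x) = C (D x) := by
  ext m
  rw [coeff_coeffDer, coeff_C, coeff_C, apply_ite D, map_zero]

lemma coeffDer_X (D : Derivation ℂ (KK n) (KK n)) : coeffDer D X = 0 := by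
  ext m
  rw [coeff_coeffDer, coeff_X, apply_ite D, D.map_one_eq_zero, map_zero, ite_self, coeff_zero]

lemma coeffDer_bK (D : Derivation ℂ (KK n) (KK n)) (b : ℂ[X]) : coeffDer D (bK b) = 0 := by
  rw [bK_eq_aeval, Derivation.map_aeval, coeffDer_X, smul_zero]

lemma coeffDer_taylor (D : Derivation ℂ (KK n) (KK n)) {a : KK n} (ha : D a = 0) (g : (KK n)[X]) :
    coeffDer D (taylor a g) = taylor a (coeffDer D g) := by
  induction g using Polynomial.induction_on' with
  | add p q hp hq => simp only [map_add, hp, hq]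
  | monomial m x =>
    have hXa : coeffDer D (X + C a) = 0 := by
      rw [map_add, coeffDer_X, coeffDer_C, ha, C_0, add_zero]
    simp only [← C_mul_X_pow_eq_monomial, taylor_mul, taylor_C, taylor_pow, taylor_X,
      Derivation.leibniz, Derivation.leibniz_pow, coeffDer_C, coeffDer_X, hXa, smul_eq_mul,
      smul_zero, mul_zero, zero_add]

lemma isStable_Weyl0_of (hmul : ∀ (r : OO n), ∀ x ∈ W, toK r * x ∈ W)
    (hder : ∀ i, ∀ x ∈ W, d i x ∈ W) : IsStable (Weyl0 d) W := by
  refine isStable_adjoin ?_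
  rintro _ (⟨r, rfl⟩ | ⟨i, rfl⟩)
  exacts [hmul r, hder i]

lemma IsStable.toK_mul_mem (h : IsStable (Weyl0 d) W) (r : OO n) {x : KK n} (hx : x ∈ W) :
    toK r * x ∈ W :=
  h _ (Algebra.subset_adjoin (Or.inl ⟨r, rfl⟩)) hx

lemma IsStable.derivation_mem (h : IsStable (Weyl0 d) W) (i : Fin n) {x : KK n} (hx : x ∈ W) :
    d i x ∈ W :=
  h _ (Algebra.subset_adjoin (Or.inr ⟨i, rfl⟩)) hx

lemma isStable_WeylS_of (hmul : ∀ (r : OO n), ∀ x ∈ N, C (toK r) * x ∈ N)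
    (hX : ∀ x ∈ N, X * x ∈ N) (hDop : ∀ i, ∀ x ∈ N, Dop (d i) f x ∈ N) :
    IsStable (WeylS d f) N := by
  refine isStable_adjoin ?_
  rintro _ ((⟨r, rfl⟩ | rfl) | ⟨i, rfl⟩)
  exacts [hmul r, hX, hDop i]

lemma IsStable.C_toK_mul_mem (h : IsStable (WeylS d f) N) (r : OO n) {x : (KK n)[X]}
    (hx : x ∈ N) : C (toK r) * x ∈ N :=
  h _ (Algebra.subset_adjoin (Or.inl (Or.inl ⟨r, rfl⟩))) hx

lemma IsStable.X_mul_mem (h : IsStable (WeylS d f) N) {x : (KK n)[X]} (hx : x ∈ N) : X * x ∈ N :=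
  h _ (Algebra.subset_adjoin (Or.inl (Or.inr rfl))) hx

lemma IsStable.Dop_mem (h : IsStable (WeylS d f) N) (i : Fin n) {x : (KK n)[X]} (hx : x ∈ N) :
    Dop (d i) f x ∈ N :=
  h _ (Algebra.subset_adjoin (Or.inr ⟨i, rfl⟩)) hx

lemma IsStable.bK_mul_mem (h : IsStable (WeylS d f) N) (b : ℂ[X]) {x : (KK n)[X]} (hx : x ∈ N) :
    bK b * x ∈ N := by
  rw [bK_eq_aeval]
  have hX : N ≤ N.comap (Algebra.lsmul ℂ ℂ (KK n)[X] (X : (KK n)[X])) := fun y hy => by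
    change X * y ∈ N
    exact h.X_mul_mem hy
  exact aeval_apply_smul_mem_of_le_comap' hx b X hX

lemma IsStable.mem_of_isCoprime (h : IsStable (WeylS d f) N) {a b : ℂ[X]} (hab : IsCoprime a b)
    {q : (KK n)[X]} (ha : bK a * q ∈ N) (hb : bK b * q ∈ N) : q ∈ N := by
  obtain ⟨u, v, huv⟩ := hab
  have hq : q = bK u * (bK a * q) + bK v * (bK b * q) := by
    rw [← mul_assoc, ← mul_assoc, ← bK_mul, ← bK_mul, ← add_mul, bK, bK, ← Polynomial.map_add, huv,
      Polynomial.map_one, one_mul]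
  rw [hq]
  exact N.add_mem (h.bK_mul_mem u ha) (h.bK_mul_mem v hb)

lemma IsStable.comap_mulOp_bK (h : IsStable (WeylS d f) N) (b : ℂ[X]) :
    IsStable (WeylS d f) (N.comap (mulOp (bK b))) := by
  have hcomm (i : Fin n) (x : (KK n)[X]) : bK b * Dop (d i) f x = Dop (d i) f (bK b * x) := by
    rw [Dop_apply, Dop_apply, Derivation.leibniz, coeffDer_bK, smul_zero, add_zero, smul_eq_mul]
    ring
  refine isStable_WeylS_of (fun r x hx => ?_) (fun x hx => ?_) (fun i x hx => ?_) <;>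
    rw [Submodule.mem_comap, mulOp_apply] at hx ⊢
  · rw [mul_left_comm]
    exact h.C_toK_mul_mem r hx
  · rw [mul_left_comm]
    exact h.X_mul_mem hx
  · rw [hcomm]
    exact h.Dop_mem i hx

end Operators

section Shift

/-- The shift `g(s) f^s ↦ g(s + k) f^(s + k)` of `K[s] f^s`. -/
def shiftOp (f : OO n) (k : ℤ) : Module.End ℂ (KK n)[X] :=
  mulOp (C (toK f ^ k)) ∘ₗ (taylor (k : KK n)).restrictScalars ℂ

/-- The specialization `g(s) f^s ↦ g(k) f^k`. -/
def specializeAt (f : OO n) (k : ℤ) : (KK n)[X] →ₗ[ℂ] KK n :=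
  (lcoeff (KK n) 0).restrictScalars ℂ ∘ₗ shiftOp f k

variable {d : Fin n → Derivation ℂ (KK n) (KK n)} {f : OO n} {N : Submodule ℂ (KK n)[X]}

lemma shiftOp_apply (f : OO n) (k : ℤ) (g : (KK n)[X]) :
    shiftOp f k g = C (toK f ^ k) * taylor (k : KK n) g := rfl

lemma shiftOp_C (f : OO n) (k : ℤ) (x : KK n) : shiftOp f k (C x) = C (toK f ^ k * x) := by
  rw [shiftOp_apply, taylor_C, C_mul]

lemma shiftOp_C_mul (f : OO n) (k : ℤ) (x : KK n) (g : (KK n)[X]) :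
    shiftOp f k (C x * g) = C x * shiftOp f k g := by
  rw [shiftOp_apply, shiftOp_apply, taylor_mul, taylor_C, mul_left_comm]

lemma shiftOp_X_mul (f : OO n) (k : ℤ) (g : (KK n)[X]) :
    shiftOp f k (X * g) = X * shiftOp f k g + (k : ℂ) • shiftOp f k g := by
  rw [shiftOp_apply, shiftOp_apply, taylor_mul, taylor_X, Algebra.smul_def, map_intCast,
    map_intCast]
  ring

lemma shiftOp_Dop (hf : f ≠ 0) (D : Derivation ℂ (KK n) (KK n)) (k : ℤ) (g : (KK n)[X]) :
    shiftOp f k (Dop D f g) = Dop D f (shiftOp f k g) := by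
  have hk : D (k : KK n) = 0 := D.map_intCast k
  rw [shiftOp_apply, shiftOp_apply, Dop_apply, Dop_apply, Derivation.leibniz, coeffDer_taylor D hk,
    coeffDer_C, Derivation.leibniz_zpow, zpow_sub_one₀ (toK_ne_zero hf)]
  simp only [map_add, taylor_mul, taylor_X, taylor_C, smul_eq_mul, zsmul_eq_mul, div_eq_mul_inv,
    C_mul, map_intCast]
  ring

lemma specializeAt_apply (f : OO n) (k : ℤ) (g : (KK n)[X]) :
    specializeAt f k g = toK f ^ k * g.eval (k : KK n) := by
  rw [← taylor_coeff_zero, ← coeff_C_mul]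
  rfl

lemma specializeAt_Dop (hf : f ≠ 0) (D : Derivation ℂ (KK n) (KK n)) (k : ℤ) (g : (KK n)[X]) :
    specializeAt f k (Dop D f g) = D (specializeAt f k g) := by
  change (shiftOp f k (Dop D f g)).coeff 0 = D ((shiftOp f k g).coeff 0)
  rw [shiftOp_Dop hf, Dop_apply, coeff_add, coeff_coeffDer, mul_assoc, coeff_X_mul_zero, add_zero]

lemma IsStable.comap_shiftOp (hf : f ≠ 0) (h : IsStable (WeylS d f) N) (k : ℤ) :
    IsStable (WeylS d f) (N.comap (shiftOp f k)) := by
  refine isStable_WeylS_of (fun r x hx => ?_) (fun x hx => ?_) (fun i x hx => ?_) <;>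
    rw [Submodule.mem_comap] at hx ⊢
  · rw [shiftOp_C_mul]
    exact h.C_toK_mul_mem r hx
  · rw [shiftOp_X_mul]
    exact N.add_mem (h.X_mul_mem hx) (N.smul_mem _ hx)
  · rw [shiftOp_Dop hf]
    exact h.Dop_mem i hx

lemma IsStable.map_specializeAt (hf : f ≠ 0) (h : IsStable (WeylS d f) N) (k : ℤ) :
    IsStable (Weyl0 d) (N.map (specializeAt f k)) := by
  refine isStable_Weyl0_of ?_ ?_
  · rintro r _ ⟨u, hu, rfl⟩
    refine ⟨C (toK r) * u, h.C_toK_mul_mem r hu, ?_⟩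
    rw [specializeAt_apply, specializeAt_apply, eval_C_mul, mul_left_comm]
  · rintro i _ ⟨u, hu, rfl⟩
    exact ⟨Dop (d i) f u, h.Dop_mem i hu, specializeAt_Dop hf _ _ _⟩

end Shift

section Localization

/-- `W` is a `𝒟`-submodule of `K` on which `f` acts invertibly, i.e. a `𝒟[1/f]`-submodule. -/
structure IsLocStable (d : Fin n → Derivation ℂ (KK n) (KK n)) (f : OO n)
    (W : Submodule ℂ (KK n)) : Prop where
  isStable : IsStable (Weyl0 d) W
  inv_mul_mem : ∀ x ∈ W, (toK f)⁻¹ * x ∈ W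

variable {d : Fin n → Derivation ℂ (KK n) (KK n)} {f : OO n} {G G' : Set (OO n)}
  {W : Submodule ℂ (KK n)}

lemma IsLocStable.zpow_mul_mem (h : IsLocStable d f W) (k : ℤ) {x : KK n} (hx : x ∈ W) :
    toK f ^ k * x ∈ W := by
  obtain ⟨m, rfl | rfl⟩ := k.eq_nat_or_neg
  · rw [zpow_natCast, ← toK_pow]
    exact h.isStable.toK_mul_mem _ hx
  · rw [zpow_neg, zpow_natCast, ← inv_pow]
    induction m with
    | zero => rwa [pow_zero, one_mul]
    | succ m ih =>
      rw [pow_succ', mul_assoc]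
      exact h.inv_mul_mem _ ih

lemma mem_locSub (r : OO n) {g : OO n} (hg : g ∈ G) (k : ℕ) :
    toK r * (toK g)⁻¹ ^ k ∈ locSub G :=
  Submodule.subset_span ⟨r, g, hg, k, rfl⟩

lemma locSub_le (h : ∀ (r : OO n), ∀ g ∈ G, ∀ k : ℕ, toK r * (toK g)⁻¹ ^ k ∈ W) :
    locSub G ≤ W := by
  refine Submodule.span_le.2 ?_
  rintro _ ⟨r, g, hg, k, rfl⟩
  exact h r g hg k

lemma locSub_le_locSub_of_dvd (h : ∀ g ∈ G, ∃ g' ∈ G', g ∣ g' ∧ g' ≠ 0) :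
    locSub G ≤ locSub G' := by
  refine locSub_le fun r g hg k => ?_
  obtain ⟨_, hgc, ⟨c, rfl⟩, h0⟩ := h g hg
  have hc : toK c ≠ 0 := toK_ne_zero (right_ne_zero_of_mul h0)
  have hrw : toK r * (toK g)⁻¹ ^ k = toK (r * c ^ k) * (toK (g * c))⁻¹ ^ k := by
    rw [toK_mul, toK_mul, toK_pow, mul_inv, mul_pow, inv_pow (toK c)]
    field_simp
  rw [hrw]
  exact mem_locSub _ hgc k

lemma isStable_locSub (hd : ExtendsPderiv d) (G : Set (OO n)) : IsStable (Weyl0 d) (locSub G) := by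
  refine isStable_Weyl0_of (fun r => ?_) (fun i => ?_)
  · suffices locSub G ≤ (locSub G).comap (LinearMap.mulLeft ℂ (toK r)) from fun x hx => this hx
    refine locSub_le fun r' g hg k => ?_
    rw [Submodule.mem_comap, LinearMap.mulLeft_apply, ← mul_assoc, ← toK_mul]
    exact mem_locSub _ hg k
  · suffices locSub G ≤ (locSub G).comap (d i).toLinearMap from fun x hx => this hx
    refine locSub_le fun r g hg k => ?_
    have quotient_rule : d i (toK r * (toK g)⁻¹ ^ k) =
        toK (MvPolynomial.pderiv i r) * (toK g)⁻¹ ^ k +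
          (-(k : ℂ)) • (toK (r * MvPolynomial.pderiv i g) * (toK g)⁻¹ ^ (k + 1)) := by
      rw [Derivation.leibniz, Derivation.leibniz_pow, Derivation.leibniz_inv, hd, hd, toK_mul]
      simp only [smul_eq_mul, nsmul_eq_mul, Algebra.smul_def, map_neg, map_natCast]
      cases k with
      | zero => simp
      | succ k => rw [Nat.add_sub_cancel]; ring
    change d i _ ∈ locSub G
    rw [quotient_rule]
    exact add_mem (mem_locSub _ hg _) (Submodule.smul_mem _ _ (mem_locSub _ hg _))

lemma isLocStable_locSub (hd : ExtendsPderiv d) (hG : ∀ g ∈ G, f ∣ g ∧ g ≠ 0) :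
    IsLocStable d f (locSub G) := by
  refine ⟨isStable_locSub hd G, ?_⟩
  suffices locSub G ≤ (locSub G).comap (LinearMap.mulLeft ℂ (toK f)⁻¹) from fun x hx => this hx
  refine locSub_le fun r g hg k => ?_
  obtain ⟨⟨c, rfl⟩, h0⟩ := hG g hg
  have hc : toK c ≠ 0 := toK_ne_zero (right_ne_zero_of_mul h0)
  have hrw : (toK f)⁻¹ * (toK r * (toK (f * c))⁻¹ ^ k) =
      toK (r * c) * (toK (f * c))⁻¹ ^ (k + 1) := by
    rw [pow_succ, toK_mul, toK_mul, mul_inv]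
    field_simp
  rw [Submodule.mem_comap, LinearMap.mulLeft_apply, hrw]
  exact mem_locSub _ hg _

end Localization

section PolySub

variable {d : Fin n → Derivation ℂ (KK n) (KK n)} {f : OO n} {V W : Submodule ℂ (KK n)}
  {N : Submodule ℂ (KK n)[X]}

lemma polySub_mono (h : V ≤ W) : polySub V ≤ polySub W := fun _ hg m => h (hg m)

lemma C_mem_polySub {x : KK n} (hx : x ∈ W) : C x ∈ polySub W := by
  intro m
  rw [coeff_C]
  split_ifs
  exacts [hx, W.zero_mem]

lemma X_mul_mem_polySub {g : (KK n)[X]} (hg : g ∈ polySub W) : X * g ∈ polySub W := by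
  rintro (_ | m)
  · rw [coeff_X_mul_zero]
    exact W.zero_mem
  · rw [coeff_X_mul]
    exact hg m

lemma polySub_le (hX : ∀ x ∈ N, X * x ∈ N) (hC : ∀ x ∈ W, C x ∈ N) : polySub W ≤ N := by
  intro g hg
  rw [g.as_sum_range_C_mul_X_pow]
  refine N.sum_mem fun m _ => ?_
  have hXpow (k : ℕ) : C (g.coeff m) * X ^ k ∈ N := by
    induction k with
    | zero => simpa only [pow_zero, mul_one] using hC _ (hg m)
    | succ k ih =>
      rw [pow_succ', mul_left_comm]
      exact hX _ ih
  exact hXpow m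

lemma isStable_polySub (hd : ExtendsPderiv d) (hW : IsLocStable d f W) :
    IsStable (WeylS d f) (polySub W) := by
  refine isStable_WeylS_of (fun r g hg m => ?_) (fun g => X_mul_mem_polySub) (fun i g hg => ?_)
  · rw [coeff_C_mul]
    exact hW.isStable.toK_mul_mem r (hg m)
  · rw [Dop_apply, mul_assoc]
    refine add_mem (fun m => hW.isStable.derivation_mem i (hg m)) (X_mul_mem_polySub fun m => ?_)
    rw [coeff_C_mul, hd, div_eq_mul_inv, mul_assoc]
    exact hW.isStable.toK_mul_mem _ (hW.inv_mul_mem _ (hg m))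

lemma polySub_le_comap_shiftOp (hd : ExtendsPderiv d) (hf : f ≠ 0) (hW : IsLocStable d f W)
    (k : ℤ) : polySub W ≤ (polySub W).comap (shiftOp f k) := by
  refine polySub_le
    (fun x => ((isStable_polySub hd hW).comap_shiftOp hf k).X_mul_mem) fun x hx => ?_
  rw [Submodule.mem_comap, shiftOp_C]
  exact C_mem_polySub (hW.zpow_mul_mem k hx)

lemma divByMonic_X_sub_C_mem_polySub {g : (KK n)[X]} (hg : g ∈ polySub W) (c : ℂ) :
    g /ₘ (X - C (algebraMap ℂ (KK n) c)) ∈ polySub W := by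
  intro m
  rw [coeff_divByMonic_X_sub_C]
  refine W.sum_mem fun i _ => ?_
  rw [← map_pow, ← Algebra.smul_def]
  exact W.smul_mem _ (hg i)

end PolySub

section RelativeSpan

/-- The preimage in `K[s]` of the submodule `𝒟[s]·T` of `K[s]` modulo `polySub V`. -/
def relSpan (d : Fin n → Derivation ℂ (KK n) (KK n)) (f : OO n) (V : Submodule ℂ (KK n))
    (T : Set (KK n)[X]) : Submodule ℂ (KK n)[X] :=
  DSpan d f T ⊔ polySub V

/-- The module `𝒟[s]·δ f^(s + j)`, as a submodule of `K[s] f^s` containing `polySub V`. -/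
def shiftedSpan (d : Fin n → Derivation ℂ (KK n) (KK n)) (f : OO n) (V : Submodule ℂ (KK n))
    (δ : KK n) (j : ℤ) : Submodule ℂ (KK n)[X] :=
  relSpan d f V {C (toK f ^ j * δ)}

variable {d : Fin n → Derivation ℂ (KK n) (KK n)} {f : OO n} {V R : Submodule ℂ (KK n)}
  {N : Submodule ℂ (KK n)[X]} {T : Set (KK n)[X]} {δ : KK n}

lemma subset_relSpan : T ⊆ relSpan d f V T := fun _ ht =>
  Submodule.mem_sup_left (subset_orbitSpan ht)

lemma polySub_le_relSpan : polySub V ≤ relSpan d f V T := le_sup_right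

lemma relSpan_le (hN : IsStable (WeylS d f) N) (hT : T ⊆ N) (hVN : polySub V ≤ N) :
    relSpan d f V T ≤ N :=
  sup_le (hN.orbitSpan_le hT) hVN

lemma isStable_relSpan (hd : ExtendsPderiv d) (hV : IsLocStable d f V) :
    IsStable (WeylS d f) (relSpan d f V T) :=
  (isStable_orbitSpan _ T).sup (isStable_polySub hd hV)

lemma relSpan_le_comap_mulOp_bK (hd : ExtendsPderiv d) (hV : IsLocStable d f V)
    (hN : IsStable (WeylS d f) N) (hVN : polySub V ≤ N) {b : ℂ[X]}
    (hT : ∀ t ∈ T, bK b * t ∈ N) : relSpan d f V T ≤ N.comap (mulOp (bK b)) :=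
  relSpan_le (hN.comap_mulOp_bK b) hT
    fun _ hx => hVN ((isStable_polySub hd hV).bK_mul_mem b hx)

lemma relSpan_le_comap_shiftOp (hd : ExtendsPderiv d) (hf : f ≠ 0) (hV : IsLocStable d f V)
    (k : ℤ) : relSpan d f V T ≤ (relSpan d f V (shiftOp f k '' T)).comap (shiftOp f k) :=
  relSpan_le ((isStable_relSpan hd hV).comap_shiftOp hf k)
    (fun _ ht => subset_relSpan (Set.mem_image_of_mem _ ht))
    ((polySub_le_comap_shiftOp hd hf hV k).trans (Submodule.comap_mono polySub_le_relSpan))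

lemma C_mem_shiftedSpan (d : Fin n → Derivation ℂ (KK n) (KK n)) (f : OO n)
    (V : Submodule ℂ (KK n)) (δ : KK n) (j : ℤ) :
    C (toK f ^ j * δ) ∈ shiftedSpan d f V δ j :=
  subset_relSpan rfl

lemma C_mem_shiftedSpan_zero (d : Fin n → Derivation ℂ (KK n) (KK n)) (f : OO n)
    (V : Submodule ℂ (KK n)) (δ : KK n) : C δ ∈ shiftedSpan d f V δ 0 := by
  simpa only [zpow_zero, one_mul] using C_mem_shiftedSpan d f V δ 0

lemma shiftedSpan_antitone (hd : ExtendsPderiv d) (hf : f ≠ 0) (hV : IsLocStable d f V) :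
    Antitone (shiftedSpan d f V δ) := by
  refine antitone_int_of_succ_le fun j => ?_
  refine relSpan_le (isStable_relSpan hd hV) ?_ polySub_le_relSpan
  rw [Set.singleton_subset_iff, zpow_add_one₀ (toK_ne_zero hf), mul_comm (toK f ^ j), mul_assoc,
    C_mul]
  exact (isStable_relSpan hd hV).C_toK_mul_mem f (C_mem_shiftedSpan d f V δ j)

lemma shiftedSpan_le_comap_shiftOp (hd : ExtendsPderiv d) (hf : f ≠ 0) (hV : IsLocStable d f V)
    (j k : ℤ) :
    shiftedSpan d f V δ j ≤ (shiftedSpan d f V δ (j + k)).comap (shiftOp f k) := by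
  have himage : shiftOp f k '' {C (toK f ^ j * δ)} = {C (toK f ^ (j + k) * δ)} := by
    rw [Set.image_singleton, shiftOp_C, ← mul_assoc, ← zpow_add₀ (toK_ne_zero hf), add_comm k j]
  rw [shiftedSpan, shiftedSpan, ← himage]
  exact relSpan_le_comap_shiftOp hd hf hV k

end RelativeSpan

section Generation

variable {d : Fin n → Derivation ℂ (KK n) (KK n)} {f : OO n} {V W : Submodule ℂ (KK n)}
  {N : Submodule ℂ (KK n)[X]} {δ : KK n}

/-- The constant elements of a submodule of `K[s] f^s`. -/
def constPart (N : Submodule ℂ (KK n)[X]) : Submodule ℂ (KK n) :=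
  N.comap (CAlgHom (R := ℂ)).toLinearMap

lemma mem_constPart {x : KK n} : x ∈ constPart N ↔ C x ∈ N := Iff.rfl

lemma isLocStable_constPart (hd : ExtendsPderiv d) (hN : IsStable (WeylS d f) N)
    (hinv : ∀ x, C x ∈ N → C ((toK f)⁻¹ * x) ∈ N) : IsLocStable d f (constPart N) := by
  refine ⟨isStable_Weyl0_of (fun r x hx => ?_) (fun i x hx => ?_), hinv⟩ <;>
    rw [mem_constPart] at hx ⊢
  · rw [C_mul]
    exact hN.C_toK_mul_mem r hx
  · have hDop : C (d i x) =
        Dop (d i) f (C x) - X * (C (toK (MvPolynomial.pderiv i f)) * C ((toK f)⁻¹ * x)) := by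
      rw [Dop_apply, coeffDer_C, hd, div_eq_mul_inv]
      simp only [C_mul]
      ring
    rw [hDop]
    exact sub_mem (hN.Dop_mem i hx) (hN.X_mul_mem (hN.C_toK_mul_mem _ (hinv x hx)))

lemma C_zpow_mul_mem_iSup_shiftedSpan (hd : ExtendsPderiv d) (hf : f ≠ 0)
    (hV : IsLocStable d f V) (k : ℤ) {x : KK n} (hx : C x ∈ ⨆ j, shiftedSpan d f V δ j) :
    C (toK f ^ k * x) ∈ ⨆ j, shiftedSpan d f V δ j := by
  rw [← shiftOp_C]
  have hle : ⨆ j, shiftedSpan d f V δ j ≤ (⨆ j, shiftedSpan d f V δ j).comap (shiftOp f k) :=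
    iSup_le fun j => (shiftedSpan_le_comap_shiftOp hd hf hV j k).trans
      (Submodule.comap_mono (le_iSup (shiftedSpan d f V δ) (j + k)))
  exact hle hx

lemma isLocStable_constPart_iSup_shiftedSpan (hd : ExtendsPderiv d) (hf : f ≠ 0)
    (hV : IsLocStable d f V) : IsLocStable d f (constPart (⨆ j, shiftedSpan d f V δ j)) :=
  isLocStable_constPart hd (.iSup fun _ => isStable_relSpan hd hV) fun x hx => by
    simpa only [zpow_neg_one] using C_zpow_mul_mem_iSup_shiftedSpan hd hf hV (-1) hx

lemma DSpan0_sup_le_constPart (hd : ExtendsPderiv d) (hf : f ≠ 0) (hV : IsLocStable d f V) :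
    DSpan0 d {δ} ⊔ V ≤ constPart (⨆ j, shiftedSpan d f V δ j) := by
  have hle := le_iSup (shiftedSpan d f V δ) 0
  refine sup_le
    ((isLocStable_constPart_iSup_shiftedSpan hd hf hV).isStable.orbitSpan_le ?_) fun x hx => ?_
  · exact Set.singleton_subset_iff.2 (hle (C_mem_shiftedSpan_zero d f V δ))
  · exact hle (polySub_le_relSpan (C_mem_polySub hx))

lemma polySub_locSub_le_iSup_shiftedSpan (hd : ExtendsPderiv d) (hf : f ≠ 0)
    (hV : IsLocStable d f V) {g : OO n}
    (hgen : ∀ (r : OO n) (k : ℕ), toK r * (toK g)⁻¹ ^ k ∈ DSpan0 d {δ} ⊔ V) :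
    polySub (locSub {f * g}) ≤ ⨆ j, shiftedSpan d f V δ j := by
  have hN : IsStable (WeylS d f) (⨆ j, shiftedSpan d f V δ j) :=
    .iSup fun _ => isStable_relSpan hd hV
  refine polySub_le (fun _ => hN.X_mul_mem)
    fun x hx => mem_constPart.1 (locSub_le (W := constPart _) ?_ hx)
  rintro r _ rfl k
  have hfg : toK r * (toK (f * g))⁻¹ ^ k = toK f ^ (-k : ℤ) * (toK r * (toK g)⁻¹ ^ k) := by
    rw [toK_mul, mul_inv, mul_pow, zpow_neg, zpow_natCast, inv_pow (toK f)]
    ring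
  rw [hfg]
  exact (isLocStable_constPart_iSup_shiftedSpan hd hf hV).zpow_mul_mem _
    (DSpan0_sup_le_constPart hd hf hV (hgen r k))

end Generation

section Jacobian

variable {p : ℕ} {d : Fin n → Derivation ℂ (KK n) (KK n)} {f : OO n} {V : Submodule ℂ (KK n)}
  {δ : KK n}

/-- The derivation `g ↦ det ∂(h₁,…,h_p,g)/∂(x_{cols 0},…,x_{cols p})`. -/
def jacobianDerivation (d : Fin n → Derivation ℂ (KK n) (KK n)) (h : Fin p → OO n)
    (cols : Fin (p + 1) → Fin n) : Derivation ℂ (KK n) (KK n) :=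
  ∑ j : Fin (p + 1), toK ((-1) ^ (p + (j : ℕ)) * minorH h (cols ∘ j.succAbove)) • d (cols j)

lemma minorHF_eq_sum (h : Fin p → OO n) (g : OO n) (cols : Fin (p + 1) → Fin n) :
    minorHF h g cols = ∑ j : Fin (p + 1), (-1) ^ (p + (j : ℕ)) * minorH h (cols ∘ j.succAbove) *
      MvPolynomial.pderiv (cols j) g := by
  rw [minorHF, Matrix.det_succ_row _ (Fin.last p)]
  refine Finset.sum_congr rfl fun j _ => ?_
  have hsub : Matrix.submatrix (Matrix.of fun i j => Fin.lastCases
      (MvPolynomial.pderiv (cols j) g) (fun i' => MvPolynomial.pderiv (cols j) (h i')) i)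
      (Fin.last p).succAbove j.succAbove =
      Matrix.of fun i j' => MvPolynomial.pderiv ((cols ∘ j.succAbove) j') (h i) := by
    ext i j'
    simp [Fin.succAbove_last]
  rw [hsub, minorH, Matrix.of_apply, Fin.lastCases_last, Fin.val_last]
  ring

lemma minorHF_self (h : Fin p → OO n) (i : Fin p) (cols : Fin (p + 1) → Fin n) :
    minorHF h (h i) cols = 0 := by
  refine Matrix.det_zero_of_row_eq (Fin.castSucc_lt_last i).ne ?_
  ext j
  simp

lemma jacobianDerivation_toK (hd : ExtendsPderiv d) (h : Fin p → OO n) (g : OO n)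
    (cols : Fin (p + 1) → Fin n) :
    jacobianDerivation d h cols (toK g) = toK (minorHF h g cols) := by
  rw [jacobianDerivation, derivation_sum_smul_apply, minorHF_eq_sum, toK_sum]
  refine Finset.sum_congr rfl fun j _ => ?_
  rw [hd, ← toK_mul]

lemma jacobianDerivation_inv_prod (hd : ExtendsPderiv d) (h : Fin p → OO n)
    (cols : Fin (p + 1) → Fin n) : jacobianDerivation d h cols (toK (∏ i, h i))⁻¹ = 0 := by
  have hprod : jacobianDerivation d h cols (toK (∏ i, h i)) = 0 := by
    refine Finset.prod_induction h (fun g => jacobianDerivation d h cols (toK g) = 0) ?_ ?_ ?_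
    · intro a b ha hb
      rw [toK_mul, Derivation.leibniz, ha, hb, smul_zero, smul_zero, add_zero]
    · exact (congrArg _ (map_one _)).trans (Derivation.map_one_eq_zero _)
    · intro i _
      rw [jacobianDerivation_toK hd, minorHF_self]
      exact map_zero _
  rw [Derivation.leibniz_inv, hprod, smul_zero]

lemma Dop_C_mul_of_apply_eq_zero (hf : f ≠ 0) {D : Derivation ℂ (KK n) (KK n)} (hD : D δ = 0) :
    Dop D f (C (toK f * δ)) = bK (X + 1) * C (D (toK f) * δ) := by
  have hf0 := toK_ne_zero hf
  rw [Dop_apply, coeffDer_C, Derivation.leibniz, hD, smul_zero, zero_add, smul_eq_mul,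
    bK_X_add_one, mul_assoc, ← C_mul]
  field_simp
  ring

lemma IsStable.Dop_jacobianDerivation_mem {N : Submodule ℂ (KK n)[X]}
    (hN : IsStable (WeylS d f) N) (h : Fin p → OO n) (cols : Fin (p + 1) → Fin n)
    {x : (KK n)[X]} (hx : x ∈ N) : Dop (jacobianDerivation d h cols) f x ∈ N := by
  have hsum : Dop (jacobianDerivation d h cols) f x = ∑ j : Fin (p + 1),
      C (toK ((-1) ^ (p + (j : ℕ)) * minorH h (cols ∘ j.succAbove))) * Dop (d (cols j)) f x := by
    simp only [Dop_apply, mul_add, Finset.sum_add_distrib]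
    congr 1
    · ext m
      simp only [jacobianDerivation, finsetSum_coeff, coeff_C_mul, coeff_coeffDer,
        derivation_sum_smul_apply]
    · rw [jacobianDerivation, derivation_sum_smul_apply, Finset.sum_div, map_sum, Finset.mul_sum,
        Finset.sum_mul]
      refine Finset.sum_congr rfl fun j _ => ?_
      rw [mul_div_assoc, C_mul]
      ring
  rw [hsum]
  exact N.sum_mem fun j _ => hN.C_toK_mul_mem _ (hN.Dop_mem _ hx)

lemma X_add_one_mul_C_minorHF_mem (hd : ExtendsPderiv d) (hf : f ≠ 0) (hV : IsLocStable d f V)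
    (h : Fin p → OO n) (cols : Fin (p + 1) → Fin n) :
    bK (X + 1) * C (toK (minorHF h f cols) * (toK (∏ i, h i))⁻¹) ∈
      shiftedSpan d f V (toK (∏ i, h i))⁻¹ 1 := by
  rw [← jacobianDerivation_toK hd,
    ← Dop_C_mul_of_apply_eq_zero hf (jacobianDerivation_inv_prod hd h cols)]
  have hmem := C_mem_shiftedSpan d f V (toK (∏ i, h i))⁻¹ 1
  rw [zpow_one] at hmem
  exact IsStable.Dop_jacobianDerivation_mem (isStable_relSpan hd hV) h cols hmem

end Jacobian

section NegativeRoots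

/-- The `𝒟[s]`-submodule of `K[s] f^s` generated by `polySub V` and `(J, f)·δ f^s`. -/
def idealSpan (d : Fin n → Derivation ℂ (KK n) (KK n)) (f : OO n) (V : Submodule ℂ (KK n))
    (δ : KK n) (J : Set (OO n)) : Submodule ℂ (KK n)[X] :=
  relSpan d f V ((fun m => C (toK m * δ)) '' insert f J)

/-- The `𝒟`-submodule of `K` generated by `V` and `(J, f)·δ f⁻¹`, i.e. the counterpart of
`idealSpan` at `s = -1`. -/
def idealSpanInv (d : Fin n → Derivation ℂ (KK n) (KK n)) (f : OO n) (V : Submodule ℂ (KK n))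
    (δ : KK n) (J : Set (OO n)) : Submodule ℂ (KK n) :=
  DSpan0 d ((fun m => (toK f)⁻¹ * (toK m * δ)) '' insert f J) ⊔ V

variable {d : Fin n → Derivation ℂ (KK n) (KK n)} {f : OO n} {V R : Submodule ℂ (KK n)}
  {δ : KK n} {J : Set (OO n)} {b : ℂ[X]} {k : ℤ}

lemma bK_taylor_mul_mem_shiftedSpan (hd : ExtendsPderiv d) (hf : f ≠ 0) (hV : IsLocStable d f V)
    (hb : bK b * C δ ∈ shiftedSpan d f V δ 1) (j : ℤ) {x : (KK n)[X]}
    (hx : x ∈ shiftedSpan d f V δ j) :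
    bK (taylor (j : ℂ) b) * x ∈ shiftedSpan d f V δ (j + 1) := by
  have hshift := shiftedSpan_le_comap_shiftOp hd hf hV 1 j hb
  rw [Submodule.mem_comap, shiftOp_apply, taylor_mul, taylor_C, ← bK_taylor_intCast, add_comm 1 j,
    mul_left_comm, ← C_mul] at hshift
  refine relSpan_le_comap_mulOp_bK hd hV (isStable_relSpan hd hV) polySub_le_relSpan ?_ hx
  rintro _ rfl
  exact hshift

lemma mem_shiftedSpan_zero_of_X_sub_C_mul_mem (hd : ExtendsPderiv d) (hf : f ≠ 0)
    (hV : IsLocStable d f V) (hb : bK b * C δ ∈ shiftedSpan d f V δ 1)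
    (hlt : ∀ l < k, b.eval (l : ℂ) ≠ 0) {q : (KK n)[X]}
    (hq : bK (X - C (k : ℂ)) * q ∈ shiftedSpan d f V δ 0) {j : ℤ}
    (hqj : q ∈ shiftedSpan d f V δ j) : q ∈ shiftedSpan d f V δ 0 := by
  have hanti : Antitone (shiftedSpan d f V δ) := shiftedSpan_antitone hd hf hV
  suffices h : ∀ i, j ≤ i → i ≤ 0 → q ∈ shiftedSpan d f V δ i by
    rcases le_total j 0 with hj | hj
    exacts [h 0 hj le_rfl, hanti hj hqj]
  intro i hji
  induction i, hji using Int.leInduction with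
  | base => exact fun _ => hqj
  | succ i _ ih =>
    intro hi
    have hki : b.eval ((k : ℂ) + i) ≠ 0 := by
      rw [← Int.cast_add]
      exact hlt (k + i) (by lia)
    exact IsStable.mem_of_isCoprime (isStable_relSpan hd hV)
      (isCoprime_X_sub_C_taylor_iff.2 hki) (hanti hi hq)
      (bK_taylor_mul_mem_shiftedSpan hd hf hV hb i (ih (by lia)))

lemma exists_eq_X_sub_C_mul_of_eval_eq_zero (hd : ExtendsPderiv d) (hf : f ≠ 0)
    (hV : IsLocStable d f V) (hb : bK b * C δ ∈ shiftedSpan d f V δ 1)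
    (hlt : ∀ l < k, b.eval (l : ℂ) ≠ 0) (hNR : shiftedSpan d f V δ 0 ≤ polySub R)
    (hRN : polySub R ≤ ⨆ j, shiftedSpan d f V δ j) {w : (KK n)[X]}
    (hw : w ∈ shiftedSpan d f V δ 0) (hw0 : w.eval (k : KK n) = 0) :
    ∃ q ∈ shiftedSpan d f V δ 0, w = bK (X - C (k : ℂ)) * q := by
  have hanti : Antitone (shiftedSpan d f V δ) := shiftedSpan_antitone hd hf hV
  have hq := hRN (divByMonic_X_sub_C_mem_polySub (hNR hw) k)
  obtain ⟨j, hqj⟩ := (Submodule.mem_iSup_of_directed _ hanti.directed_le).1 hq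
  have hwq : w = bK (X - C (k : ℂ)) * (w /ₘ (X - C (algebraMap ℂ (KK n) k))) := by
    rw [bK_X_sub_C, mul_divByMonic_eq_iff_isRoot.2]
    rwa [IsRoot, map_intCast]
  exact ⟨_, mem_shiftedSpan_zero_of_X_sub_C_mul_mem hd hf hV hb hlt (hwq ▸ hw) hqj, hwq⟩

lemma inv_mul_mem_idealSpanInv {m : OO n} (hm : m ∈ insert f J) :
    (toK f)⁻¹ * (toK m * δ) ∈ idealSpanInv d f V δ J :=
  Submodule.mem_sup_left (subset_orbitSpan (Set.mem_image_of_mem _ hm))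

lemma mem_idealSpanInv_self (hf : f ≠ 0) : δ ∈ idealSpanInv d f V δ J := by
  have hmem : (toK f)⁻¹ * (toK f * δ) ∈ idealSpanInv d f V δ J :=
    inv_mul_mem_idealSpanInv (Set.mem_insert f J)
  rwa [inv_mul_cancel_left₀ (toK_ne_zero hf)] at hmem

lemma isStable_idealSpanInv (hV : IsLocStable d f V) :
    IsStable (Weyl0 d) (idealSpanInv d f V δ J) :=
  (isStable_orbitSpan _ _).sup hV.isStable

lemma idealSpanInv_le_map_specializeAt (hd : ExtendsPderiv d) (hf : f ≠ 0) (hV : IsLocStable d f V)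
    (hk : k < 0) :
    idealSpanInv d f V δ J ≤ (idealSpan d f V δ J).map (specializeAt f k) := by
  have hstable := IsStable.map_specializeAt hf (isStable_relSpan hd hV) k
    (N := idealSpan d f V δ J)
  have hf0 : toK f ≠ 0 := toK_ne_zero hf
  refine sup_le (hstable.orbitSpan_le ?_) fun x hx => ?_
  · rintro _ ⟨m, hm, rfl⟩
    obtain ⟨e, rfl⟩ : ∃ e : ℕ, k = -(e + 1 : ℕ) := ⟨(-k - 1).toNat, by lia⟩
    have hspec := hstable.toK_mul_mem (f ^ e)
      (Submodule.mem_map_of_mem (subset_relSpan (Set.mem_image_of_mem _ hm)))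
    rw [specializeAt_apply, eval_C, ← mul_assoc, toK_pow, zpow_neg, zpow_natCast, pow_succ,
      mul_inv, mul_inv_cancel_left₀ (pow_ne_zero e hf0)] at hspec
    exact hspec
  · refine ⟨C (toK f ^ (-k) * x), polySub_le_relSpan (C_mem_polySub (hV.zpow_mul_mem _ hx)), ?_⟩
    rw [specializeAt_apply, eval_C, ← mul_assoc, ← zpow_add₀ hf0, add_neg_cancel, zpow_zero,
      one_mul]

lemma idealSpan_le_shiftedSpan_zero (hd : ExtendsPderiv d) (hV : IsLocStable d f V) :
    idealSpan d f V δ J ≤ shiftedSpan d f V δ 0 := by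
  refine relSpan_le (isStable_relSpan hd hV) ?_ polySub_le_relSpan
  rintro _ ⟨m, -, rfl⟩
  simp only [C_mul]
  exact IsStable.C_toK_mul_mem (isStable_relSpan hd hV) m (C_mem_shiftedSpan_zero d f V δ)

lemma bK_mul_mem_idealSpan (hd : ExtendsPderiv d) (hV : IsLocStable d f V)
    (hb : bK b * C δ ∈ idealSpan d f V δ J) {x : (KK n)[X]}
    (hx : x ∈ shiftedSpan d f V δ 0) : bK b * x ∈ idealSpan d f V δ J := by
  refine relSpan_le_comap_mulOp_bK hd hV (isStable_relSpan hd hV) polySub_le_relSpan ?_ hx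
  rintro _ rfl
  rwa [zpow_zero, one_mul]

lemma X_add_one_mul_mem_shiftedSpan_one (hd : ExtendsPderiv d) (hV : IsLocStable d f V)
    (hJ : ∀ m ∈ J, bK (X + 1) * C (toK m * δ) ∈ shiftedSpan d f V δ 1) {x : (KK n)[X]}
    (hx : x ∈ idealSpan d f V δ J) : bK (X + 1) * x ∈ shiftedSpan d f V δ 1 := by
  have hstable : IsStable (WeylS d f) (shiftedSpan d f V δ 1) := isStable_relSpan hd hV
  refine relSpan_le_comap_mulOp_bK hd hV hstable polySub_le_relSpan ?_ hx
  rintro _ ⟨m, rfl | hm, rfl⟩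
  · refine hstable.bK_mul_mem _ ?_
    simpa only [zpow_one] using C_mem_shiftedSpan d m V δ 1
  · exact hJ m hm

/-- `b'` generates the ideal of all `b(s)` such that `b(s)·δ f^s` lies in `𝒟[s](J, f)·δ f^s`. -/
structure IsReducedBernsteinPoly (d : Fin n → Derivation ℂ (KK n) (KK n)) (f : OO n)
    (V : Submodule ℂ (KK n)) (δ : KK n) (J : Set (OO n)) (b' : ℂ[X]) : Prop where
  mem : bK b' * C δ ∈ idealSpan d f V δ J
  dvd : ∀ c : ℂ[X], bK c * C δ ∈ idealSpan d f V δ J → b' ∣ c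

lemma IsReducedBernsteinPoly.eval_ne_zero (hd : ExtendsPderiv d) (hf : f ≠ 0)
    (hV : IsLocStable d f V) (hNR : shiftedSpan d f V δ 0 ≤ polySub R)
    (hRN : polySub R ≤ ⨆ j, shiftedSpan d f V δ j)
    (hJ : ∀ m ∈ J, bK (X + 1) * C (toK m * δ) ∈ shiftedSpan d f V δ 1)
    {b' : ℂ[X]} (hb' : IsReducedBernsteinPoly d f V δ J b') (hb'0 : b' ≠ 0) (hk : k < 0)
    (hδk : toK f ^ k * δ ∈ idealSpanInv d f V δ J)
    (hlt : ∀ l < k, b'.eval (l : ℂ) ≠ 0) : b'.eval (k : ℂ) ≠ 0 := by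
  intro hroot
  obtain ⟨b₁, rfl⟩ := dvd_iff_isRoot.2 hroot
  obtain ⟨u, hu, huk⟩ := idealSpanInv_le_map_specializeAt hd hf hV hk hδk
  have hw : C δ - u ∈ shiftedSpan d f V δ 0 :=
    sub_mem (C_mem_shiftedSpan_zero d f V δ) (idealSpan_le_shiftedSpan_zero hd hV hu)
  have hw0 : (C δ - u).eval (k : KK n) = 0 := by
    rw [specializeAt_apply] at huk
    rw [eval_sub, eval_C, mul_left_cancel₀ (zpow_ne_zero k (toK_ne_zero hf)) huk, sub_self]
  have hb : bK ((X + 1) * ((X - C (k : ℂ)) * b₁)) * C δ ∈ shiftedSpan d f V δ 1 := by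
    rw [bK_mul, mul_assoc]
    exact X_add_one_mul_mem_shiftedSpan_one hd hV hJ hb'.mem
  have hlt' (l : ℤ) (hl : l < k) : ((X + 1) * ((X - C (k : ℂ)) * b₁)).eval (l : ℂ) ≠ 0 := by
    rw [eval_mul]
    refine mul_ne_zero ?_ (hlt l hl)
    rw [eval_add, eval_X, eval_one]
    exact_mod_cast show l + 1 ≠ 0 by lia
  obtain ⟨q, hq, hwq⟩ := exists_eq_X_sub_C_mul_of_eval_eq_zero hd hf hV hb hlt' hNR hRN hw hw0
  have hb₁ : bK b₁ * C δ ∈ idealSpan d f V δ J := by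
    have hsplit : bK b₁ * C δ = bK ((X - C (k : ℂ)) * b₁) * q + bK b₁ * u := by
      rw [bK_mul, mul_right_comm, ← hwq]
      ring
    rw [hsplit]
    exact add_mem (bK_mul_mem_idealSpan hd hV hb'.mem hq)
      (IsStable.bK_mul_mem (isStable_relSpan hd hV) b₁ hu)
  have hdvd : X - C (k : ℂ) ∣ 1 := by
    rw [← mul_dvd_mul_iff_right (right_ne_zero_of_mul hb'0), one_mul]
    exact hb'.dvd b₁ hb₁
  exact not_isUnit_X_sub_C _ (isUnit_of_dvd_one hdvd)

end NegativeRoots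

section CompleteIntersection

variable {p : ℕ} {d : Fin n → Derivation ℂ (KK n) (KK n)} {h : Fin p → OO n} {f : OO n} {k : ℤ}

/-- The maximal minors of the Jacobian matrix of `(h₁,…,h_p,f)`, which generate `𝒥_{h,f}`. -/
def maxMinors (h : Fin p → OO n) (f : OO n) : Set (OO n) :=
  {m | ∃ cols : Fin (p + 1) → Fin n, StrictMono cols ∧ m = minorHF h f cols}

/-- `Σᵢ 𝒪[1/(f·h₁⋯ȟᵢ⋯h_p)]`, so that `ℛ_h[1/f]` is `𝒪[1/(f·h₁⋯h_p)]` modulo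
`omitLocSub h f`. -/
def omitLocSub (h : Fin p → OO n) (f : OO n) : Submodule ℂ (KK n) :=
  locSub {x | ∃ i : Fin p, x = f * ∏ j ∈ Finset.univ.erase i, h j}

lemma image_insert_maxMinors {α : Type*} (φ : OO n → α) :
    φ '' insert f (maxMinors h f) =
      {y | ∃ cols : Fin (p + 1) → Fin n, StrictMono cols ∧ y = φ (minorHF h f cols)} ∪ {φ f} := by
  rw [Set.image_insert_eq, Set.insert_eq, Set.union_comm]
  congr 1
  ext y
  constructor
  · rintro ⟨_, ⟨cols, hcols, rfl⟩, rfl⟩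
    exact ⟨cols, hcols, rfl⟩
  · rintro ⟨cols, hcols, rfl⟩
    exact ⟨_, ⟨cols, hcols, rfl⟩, rfl⟩

lemma mul_prod_erase_ne_zero (hh : ∀ i, h i ≠ 0) (hf : f ≠ 0) (i : Fin p) :
    f * ∏ j ∈ Finset.univ.erase i, h j ≠ 0 :=
  mul_ne_zero hf (Finset.prod_ne_zero_iff.2 fun j _ => hh j)

lemma isLocStable_omitLocSub (hd : ExtendsPderiv d) (hh : ∀ i, h i ≠ 0) (hf : f ≠ 0) :
    IsLocStable d f (omitLocSub h f) := by
  refine isLocStable_locSub hd ?_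
  rintro _ ⟨i, rfl⟩
  exact ⟨dvd_mul_right _ _, mul_prod_erase_ne_zero hh hf i⟩

lemma locSub_prod_erase_le_omitLocSub (hh : ∀ i, h i ≠ 0) (hf : f ≠ 0) :
    locSub {x | ∃ i : Fin p, x = ∏ j ∈ Finset.univ.erase i, h j} ≤ omitLocSub h f := by
  refine locSub_le_locSub_of_dvd ?_
  rintro _ ⟨i, rfl⟩
  exact ⟨_, ⟨i, rfl⟩, dvd_mul_left _ _, mul_prod_erase_ne_zero hh hf i⟩

lemma shiftedSpan_zero_le_polySub_locSub (hd : ExtendsPderiv d) (hh : ∀ i, h i ≠ 0) (hf : f ≠ 0) :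
    shiftedSpan d f (omitLocSub h f) (toK (∏ i, h i))⁻¹ 0 ≤ polySub (locSub {f * ∏ i, h i}) := by
  have hfH : f * ∏ i, h i ≠ 0 := mul_ne_zero hf (Finset.prod_ne_zero_iff.2 fun i _ => hh i)
  have hR : IsLocStable d f (locSub {f * ∏ i, h i}) := isLocStable_locSub hd (by
    rintro _ rfl
    exact ⟨dvd_mul_right _ _, hfH⟩)
  have hδ : (toK (∏ i, h i))⁻¹ ∈ locSub {f * ∏ i, h i} := by
    have hinv : (toK (∏ i, h i))⁻¹ = toK f * (toK (f * ∏ i, h i))⁻¹ ^ 1 := by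
      rw [pow_one, toK_mul, mul_inv, mul_inv_cancel_left₀ (toK_ne_zero hf)]
    rw [hinv]
    exact mem_locSub f (Set.mem_singleton _) 1
  refine relSpan_le (isStable_polySub hd hR) ?_ (polySub_mono (locSub_le_locSub_of_dvd ?_))
  · rintro _ rfl
    exact C_mem_polySub (hR.zpow_mul_mem 0 hδ)
  · rintro _ ⟨i, rfl⟩
    refine ⟨_, rfl, mul_dvd_mul_left f ?_, hfH⟩
    exact Finset.prod_dvd_prod_of_subset _ _ h (Finset.erase_subset i _)

lemma DSpan0_minorHF_sup_locSub_le_idealSpanInv (hd : ExtendsPderiv d) (hh : ∀ i, h i ≠ 0)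
    (hf : f ≠ 0)
    (hgen : ∀ (r : OO n) (k : ℕ), toK r * (toK (∏ i, h i))⁻¹ ^ k ∈
      DSpan0 d {(toK (∏ i, h i))⁻¹} ⊔ omitLocSub h f) :
    DSpan0 d {x | ∃ cols : Fin (p + 1) → Fin n, StrictMono cols ∧
          x = toK (minorHF h f cols) * (toK (f * ∏ i, h i))⁻¹} ⊔
        locSub ({x | ∃ i : Fin p, x = f * ∏ j ∈ Finset.univ.erase i, h j} ∪ {∏ i, h i}) ≤
      idealSpanInv d f (omitLocSub h f) (toK (∏ i, h i))⁻¹ (maxMinors h f) := by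
  have hstable : IsStable (Weyl0 d)
      (idealSpanInv d f (omitLocSub h f) (toK (∏ i, h i))⁻¹ (maxMinors h f)) :=
    isStable_idealSpanInv (isLocStable_omitLocSub hd hh hf)
  refine sup_le (hstable.orbitSpan_le ?_) (locSub_le ?_)
  · rintro _ ⟨cols, hcols, rfl⟩
    rw [toK_mul, mul_inv, mul_left_comm]
    exact inv_mul_mem_idealSpanInv (Set.mem_insert_of_mem f ⟨cols, hcols, rfl⟩)
  · rintro r _ (⟨i, rfl⟩ | rfl) k
    · exact Submodule.mem_sup_right (mem_locSub r (Set.mem_ofPred.2 ⟨i, rfl⟩) k)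
    · refine sup_le (hstable.orbitSpan_le ?_) le_sup_right (hgen r k)
      exact Set.singleton_subset_iff.2 (mem_idealSpanInv_self hf)

lemma exists_zpow_mul_inv_eq {g : OO n} (hg : g ≠ 0) (f : OO n) (hk : k < 0) :
    ∃ (r : OO n) (a : ℕ), toK f ^ k * (toK g)⁻¹ = toK r * (toK (f * g))⁻¹ ^ a := by
  obtain ⟨e, rfl⟩ : ∃ e : ℕ, k = -(e + 1 : ℕ) := ⟨(-k - 1).toNat, by lia⟩
  refine ⟨g ^ e, e + 1, ?_⟩
  have hg0 : toK g ^ e ≠ 0 := pow_ne_zero e (toK_ne_zero hg)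
  rw [zpow_neg, zpow_natCast, toK_pow, toK_mul, inv_pow, mul_pow, pow_succ (toK g)]
  field_simp

end CompleteIntersection

/-- converse direction of the main theorem: if `𝒟δ_h = ℛ_h` and `ℒ_{h,f} = ℛ_{h,f}`, then `−1` is not a root of `b'_f(h,s)` and `b'_f(h,s)` has no strictly negative integral root. -/
theorem main_theorem_converse (n p : ℕ)
    (d : Fin n → Derivation ℂ (KK n) (KK n)) (hd : ExtendsPderiv d)
    (h : Fin p → OO n) (f : OO n) (hh : ∀ i, h i ≠ 0) (hf : f ≠ 0)
    -- `δ_h = 1/(h₁⋯h_p)` and `δ_{h,f} = 1/(h₁⋯h_p·f)` in `K`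
    (delta deltaf : KK n)
    (hdelta : delta = (toK (∏ i, h i))⁻¹) (hdeltaf : deltaf = (toK (f * ∏ i, h i))⁻¹)
    -- `Σᵢ 𝒪[1/(h₁⋯ȟᵢ⋯h_p)]`, so that `ℛ_h = 𝒪[1/h₁⋯h_p] mod Wh`
    (Wh : Submodule ℂ (KK n))
    (hWh : Wh = locSub {x | ∃ i : Fin p, x = ∏ j ∈ Finset.univ.erase i, h j})
    -- the analogous submodule for the morphism `(h,f)`, so that
    -- `ℛ_{h,f} = 𝒪[1/(h₁⋯h_p·f)] mod Whf`
    (Whf : Submodule ℂ (KK n))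
    (hWhf : Whf = locSub ({x | ∃ i : Fin p, x = f * ∏ j ∈ Finset.univ.erase i, h j}
      ∪ {∏ i, h i}))
    -- `ℒ_{h,f} = Σ 𝒟·(m_{k₁,…,k_{p+1}}(h,f)·δ_{h,f})` inside `ℛ_{h,f}`
    (L : Submodule ℂ (KK n))
    (hL : L = DSpan0 d {x | ∃ cols : Fin (p + 1) → Fin n, StrictMono cols ∧
        x = toK (minorHF h f cols) * deltaf})
    -- hypothesis `𝒟δ_h = ℛ_h`
    (hgen : ∀ (r : OO n) (k : ℕ),
      toK r * (toK (∏ i, h i))⁻¹ ^ k ∈ DSpan0 d {delta} ⊔ Wh)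
    -- the ambient `𝒟[s]`-module for `δ_h f^s` is `K[s]` modulo `polySub V`
    (V : Submodule ℂ (KK n))
    (hV : V = locSub {x | ∃ i : Fin p, x = f * ∏ j ∈ Finset.univ.erase i, h j})
    -- `b'` is the monic generator `b'_f(h,s)` of the ideal of `b(s)` with
    -- `b(s) δ_h f^s ∈ 𝒟[s](𝒥_{h,f}, f) δ_h f^s`
    (memB' : Polynomial ℂ → Prop)
    (hmemB' : ∀ b : Polynomial ℂ, memB' b ↔
      bK b * Polynomial.C delta ∈
        DSpan d f ({y | ∃ cols : Fin (p + 1) → Fin n, StrictMono cols ∧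
            y = Polynomial.C (toK (minorHF h f cols) * delta)} ∪
          {Polynomial.C (toK f * delta)}) ⊔ polySub V)
    (b' : Polynomial ℂ) (hb'1 : b'.Monic) (hb'2 : memB' b')
    (hb'3 : ∀ c : Polynomial ℂ, memB' c → b' ∣ c)
    (hLR : ∀ (r : OO n) (k : ℕ), toK r * (toK (f * ∏ i, h i))⁻¹ ^ k ∈ L ⊔ Whf) :
    b'.eval (-1) ≠ 0 ∧ (∀ k : ℤ, k < 0 → b'.eval (k : ℂ) ≠ 0) := by
  subst hdelta hdeltaf hWh hWhf hL hV
  have hV := isLocStable_omitLocSub hd hh hf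
  have hH : ∏ i, h i ≠ 0 := Finset.prod_ne_zero_iff.2 fun i _ => hh i
  have hgenV (r : OO n) (k : ℕ) : toK r * (toK (∏ i, h i))⁻¹ ^ k ∈
      DSpan0 d {(toK (∏ i, h i))⁻¹} ⊔ omitLocSub h f :=
    sup_le_sup_left (locSub_prod_erase_le_omitLocSub hh hf) _ (hgen r k)
  have hB : IsReducedBernsteinPoly d f (omitLocSub h f) (toK (∏ i, h i))⁻¹ (maxMinors h f) b' := by
    constructor <;> rw [idealSpan, image_insert_maxMinors]
    exacts [(hmemB' b').1 hb'2, fun c hc => hb'3 c ((hmemB' c).2 hc)]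
  have hminors : ∀ m ∈ maxMinors h f, bK (X + 1) * C (toK m * (toK (∏ i, h i))⁻¹) ∈
      shiftedSpan d f (omitLocSub h f) (toK (∏ i, h i))⁻¹ 1 := by
    rintro _ ⟨cols, -, rfl⟩
    exact X_add_one_mul_C_minorHF_mem hd hf hV h cols
  have hneg := forall_neg_eval_intCast_ne_zero hb'1.ne_zero fun k hk hlt => by
    obtain ⟨r, a, hra⟩ := exists_zpow_mul_inv_eq hH f hk
    refine hB.eval_ne_zero hd hf hV (shiftedSpan_zero_le_polySub_locSub hd hh hf)
      (polySub_locSub_le_iSup_shiftedSpan hd hf hV hgenV) hminors hb'1.ne_zero hk ?_ hlt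
    rw [hra]
    exact DSpan0_minorHF_sup_locSub_le_idealSpanInv hd hh hf hgenV (hLR r a)
  exact ⟨by simpa using hneg (-1) (by norm_num), hneg⟩
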